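/- arXiv:1906.00020 — 3 statements merged into one kernel-verified Lean document; each statement's English description precedes it below -/
import Mathlib

section
/- Let (A_{a_i} b_i)_{i=1}^n be the k-sandwiching sequence of some m > 0, with sandwiching values (m_i)_{i=0}^n. Then for every i with 1 ≤ i < n: (1) b_{i+1} < min{ A_{a_{i+1}}^{k−1}(A_{a_{i+1}+1}(m_i − 1)), A_{a_i − 1}^{k−1}(m_i) }; (2) A_{a_{i+1}}(b_{i+1} + 1) ≤ A_{a_{i+1}+1}(m_i); (3) A_{a_{i+1}}(b_{i+1} + 1) ≤ A_{a_i}(b_i + 1). -/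
/-- The base-`k` Ackermann function `A_a(k, b)`:
`A_0(k, b) = k ^ b` and `A_{a+1}(k, b) = A_a^k(k, A_{a+1}(k, b-1))`,
with the auxiliary value `A_{a+1}(k, -1) = 1`
(equivalently, `A_{a+1}(k, b) = (A_a^k)^[b+1] (1)`). -/
def Ack (k : ℕ) : ℕ → ℕ → ℕ
  | 0, b => k ^ b
  | a + 1, b => ((Ack k a)^[k])^[b + 1] 1

/-- `IsSandwich k m n a b ms` says that `(A_{a i}(k, b i))_{i=1}^n` is a
`k`-sandwiching sequence for `m`, with sandwiching values `(ms i)_{i=0}^n`: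
`ms 0 = 0`; for each `i < n`, `A_{a (i+1)} (ms i) ≤ m < A_{a (i+1) + 1} (ms i)`,
`A_{a (i+1)} (b (i+1)) ≤ m < A_{a (i+1)} (b (i+1) + 1)`, and
`ms (i+1) = A_{a (i+1)} (b (i+1))`; and `A_0 (ms n) > m`. -/
structure IsSandwich (k m n : ℕ) (a b ms : ℕ → ℕ) : Prop where
  ms_zero : ms 0 = 0
  idx_lo : ∀ i < n, Ack k (a (i + 1)) (ms i) ≤ m
  idx_hi : ∀ i < n, m < Ack k (a (i + 1) + 1) (ms i)
  arg_lo : ∀ i < n, Ack k (a (i + 1)) (b (i + 1)) ≤ m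
  arg_hi : ∀ i < n, m < Ack k (a (i + 1)) (b (i + 1) + 1)
  ms_succ : ∀ i < n, ms (i + 1) = Ack k (a (i + 1)) (b (i + 1))
  halt : m < Ack k 0 (ms n)

/-!
Every value of `A_c` is a value of `A_a` when `a ≤ c`, so consecutive values of `A_a` never
strictly enclose a value of `A_c`. In a sandwiching sequence the indices strictly decrease, since
otherwise `A_{a_{i+1}} m_i ≥ A_{a_i} (b_i + 1) > m`; hence the interval
`[A_{a_{i+1}} b_{i+1}, A_{a_{i+1}} (b_{i+1} + 1))` around `m` does not cross the upper bounds
`A_{a_{i+1}+1} m_i` and `A_{a_i} (b_i + 1)` known from before. Unfolding the outermost application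
of the Ackermann function in these bounds gives the bounds on `b_{i+1}`, except that for
`a_{i+1} + 1 < a_i` the second one already follows from `b_{i+1} < m < A_{a_i - 1} m_i`.
-/

theorem strictMono_iterate_iterate {α : Type*} [Preorder α] {f : α → α} {x : α} {k : ℕ}
    (hf : StrictMono f) (hx : x < f x) (hk : 0 < k) : StrictMono fun n => (f^[k])^[n] x :=
  (hf.iterate k).strictMono_iterate_of_lt_map (hf.strictMono_iterate_of_lt_map hx hk)

namespace Ack

variable {k : ℕ}

theorem strictMono_and_lt_apply (hk : 2 ≤ k) (a : ℕ) :
    StrictMono (Ack k a) ∧ ∀ x, x < Ack k a x := by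
  induction a with
  | zero => exact ⟨fun _ _ h => Nat.pow_lt_pow_right hk h, fun _ => Nat.lt_pow_self hk⟩
  | succ a ih =>
    obtain ⟨hmono, hlt⟩ := ih
    have hiter : StrictMono fun b => ((Ack k a)^[k])^[b] 1 :=
      strictMono_iterate_iterate hmono (hlt 1) (by lia)
    exact ⟨fun _ _ h => hiter (Nat.succ_lt_succ h), fun x => hiter.le_apply (x := x + 1)⟩

theorem strictMono (hk : 2 ≤ k) (a : ℕ) : StrictMono (Ack k a) :=
  (strictMono_and_lt_apply hk a).1

theorem lt_apply (hk : 2 ≤ k) (a x : ℕ) : x < Ack k a x :=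
  (strictMono_and_lt_apply hk a).2 x

theorem succ_eq_apply_iterate (hk : 0 < k) (a b : ℕ) :
    Ack k (a + 1) b = Ack k a ((Ack k a)^[k - 1] (((Ack k a)^[k])^[b] 1)) := by
  rw [← Function.iterate_succ_apply' (Ack k a), Nat.succ_eq_add_one, Nat.sub_add_cancel hk]
  exact Function.iterate_succ_apply' _ b 1

theorem succ_add_one (hk : 0 < k) (a b : ℕ) :
    Ack k (a + 1) (b + 1) = Ack k a ((Ack k a)^[k - 1] (Ack k (a + 1) b)) :=
  succ_eq_apply_iterate hk a (b + 1)

theorem apply_lt_succ_add_one_iff (hk : 2 ≤ k) {a x b : ℕ} :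
    Ack k a x < Ack k (a + 1) (b + 1) ↔ x < (Ack k a)^[k - 1] (Ack k (a + 1) b) := by
  rw [succ_add_one (by lia), (strictMono hk a).lt_iff_lt]

theorem exists_apply_eq_succ (hk : 2 ≤ k) (a y : ℕ) :
    ∃ x, y ≤ x ∧ Ack k a x = Ack k (a + 1) y := by
  refine ⟨_, ?_, (succ_eq_apply_iterate (by lia) a y).symm⟩
  calc
    y ≤ ((Ack k a)^[k])^[y] 1 :=
      (strictMono_iterate_iterate (strictMono hk a) (lt_apply hk a 1) (by lia)).le_apply
    _ ≤ (Ack k a)^[k - 1] (((Ack k a)^[k])^[y] 1) := ((strictMono hk a).iterate _).le_apply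

theorem exists_apply_eq_of_le (hk : 2 ≤ k) {a a' : ℕ} (ha : a ≤ a') (y : ℕ) :
    ∃ x, y ≤ x ∧ Ack k a x = Ack k a' y := by
  induction a', ha using Nat.le_induction generalizing y with
  | base => exact ⟨y, le_rfl, rfl⟩
  | succ a' _ ih =>
    obtain ⟨z, hyz, hz⟩ := exists_apply_eq_succ hk a' y
    obtain ⟨x, hzx, hx⟩ := ih z
    exact ⟨x, hyz.trans hzx, hx.trans hz⟩

theorem monotone_index (hk : 2 ≤ k) (x : ℕ) : Monotone fun a => Ack k a x := by
  intro a a' ha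
  obtain ⟨z, hxz, hz⟩ := exists_apply_eq_of_le hk ha x
  exact ((strictMono hk a).monotone hxz).trans_eq hz

theorem apply_add_one_le_of_lt (hk : 2 ≤ k) {a a' x y : ℕ} (ha : a ≤ a')
    (h : Ack k a x < Ack k a' y) : Ack k a (x + 1) ≤ Ack k a' y := by
  obtain ⟨z, -, hz⟩ := exists_apply_eq_of_le hk ha y
  rw [← hz] at h ⊢
  exact (strictMono hk a).monotone ((strictMono hk a).lt_iff_lt.1 h)

end Ack

namespace IsSandwich

variable {k m n i : ℕ} {a b ms : ℕ → ℕ}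

theorem arg_lt_value (hs : IsSandwich k m n a b ms) (hk : 2 ≤ k) (hi : i < n) :
    b (i + 1) < ms (i + 1) :=
  hs.ms_succ i hi ▸ Ack.lt_apply hk _ _

theorem index_lt (hs : IsSandwich k m n a b ms) (hk : 2 ≤ k) (hi : i + 1 < n) :
    a (i + 2) < a (i + 1) := by
  by_contra! hle
  refine lt_irrefl m ?_
  calc
    m < Ack k (a (i + 1)) (b (i + 1) + 1) := hs.arg_hi i (by lia)
    _ ≤ Ack k (a (i + 1)) (ms (i + 1)) :=
      (Ack.strictMono hk _).monotone (hs.arg_lt_value hk (by lia))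
    _ ≤ Ack k (a (i + 2)) (ms (i + 1)) := Ack.monotone_index hk _ hle
    _ ≤ m := hs.idx_lo (i + 1) hi

theorem arg_lt_iterate_value_pred (hs : IsSandwich k m n a b ms) (hk : 2 ≤ k) (hi : i + 1 < n) :
    b (i + 2) < (Ack k (a (i + 2)))^[k - 1] (Ack k (a (i + 2) + 1) (ms (i + 1) - 1)) := by
  have value_pos : 0 < ms (i + 1) := (hs.arg_lt_value hk (by lia)).pos
  rw [← Ack.apply_lt_succ_add_one_iff hk, Nat.sub_add_cancel value_pos]
  exact (hs.arg_lo (i + 1) hi).trans_lt (hs.idx_hi (i + 1) hi)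

theorem arg_lt_iterate_index_pred (hs : IsSandwich k m n a b ms) (hk : 2 ≤ k) (hi : i + 1 < n) :
    b (i + 2) < (Ack k (a (i + 1) - 1))^[k - 1] (ms (i + 1)) := by
  have hlt := hs.index_lt hk hi
  obtain ⟨c, hc⟩ : ∃ c, a (i + 1) = c + 1 := Nat.exists_eq_add_one.2 hlt.pos
  rw [hc, Nat.add_sub_cancel]
  have harg := hs.arg_lo (i + 1) hi
  obtain heq | hlt_pred : a (i + 2) = c ∨ a (i + 2) < c := by lia
  · rw [hs.ms_succ i (by lia), hc, ← Ack.apply_lt_succ_add_one_iff hk, ← hc, ← heq]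
    exact harg.trans_lt (hs.arg_hi i (by lia))
  · calc
      b (i + 2) < Ack k (a (i + 2)) (b (i + 2)) := Ack.lt_apply hk _ _
      _ ≤ m := harg
      _ ≤ Ack k (a (i + 2) + 1) (ms (i + 1)) := (hs.idx_hi (i + 1) hi).le
      _ ≤ Ack k c (ms (i + 1)) := Ack.monotone_index hk _ hlt_pred
      _ ≤ (Ack k c)^[k - 1] (ms (i + 1)) :=
        ((Ack.strictMono hk c).strictMono_iterate_of_lt_map (Ack.lt_apply hk c _)).monotone
          (by lia : 1 ≤ k - 1)

theorem apply_arg_add_one_le_apply_value (hs : IsSandwich k m n a b ms) (hk : 2 ≤ k) (hi : i < n) :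
    Ack k (a (i + 1)) (b (i + 1) + 1) ≤ Ack k (a (i + 1) + 1) (ms i) :=
  Ack.apply_add_one_le_of_lt hk (Nat.le_succ _) ((hs.arg_lo i hi).trans_lt (hs.idx_hi i hi))

theorem apply_arg_add_one_le (hs : IsSandwich k m n a b ms) (hk : 2 ≤ k) (hi : i + 1 < n) :
    Ack k (a (i + 2)) (b (i + 2) + 1) ≤ Ack k (a (i + 1)) (b (i + 1) + 1) :=
  Ack.apply_add_one_le_of_lt hk (hs.index_lt hk hi).le
    ((hs.arg_lo (i + 1) hi).trans_lt (hs.arg_hi i (by lia)))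

end IsSandwich

theorem stmt_2 (k m n : ℕ) (a b ms : ℕ → ℕ) (hk : 2 ≤ k) (hm : 0 < m)
    (hs : IsSandwich k m n a b ms) :
    ∀ i, 1 ≤ i → i < n →
      b (i + 1) <
        min ((Ack k (a (i + 1)))^[k - 1] (Ack k (a (i + 1) + 1) (ms i - 1)))
          ((Ack k (a i - 1))^[k - 1] (ms i)) ∧
      Ack k (a (i + 1)) (b (i + 1) + 1) ≤ Ack k (a (i + 1) + 1) (ms i) ∧
      Ack k (a (i + 1)) (b (i + 1) + 1) ≤ Ack k (a i) (b i + 1) := by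
  intro i hi hin
  obtain ⟨i, rfl⟩ := Nat.exists_eq_add_of_le' hi
  exact ⟨lt_min (hs.arg_lt_iterate_value_pred hk hin) (hs.arg_lt_iterate_index_pred hk hin),
    hs.apply_arg_add_one_le_apply_value hk hin, hs.apply_arg_add_one_le hk hin⟩
end

section
/- Suppose m > 0 has k-sandwiching sequence (A_{a_i} b_i)_{i=1}^n with sandwiching values (m_i)_{i=0}^n, and suppose w and j with 1 ≤ j ≤ n satisfy A_{a_j} b_j ≤ w < A_{a_j}(b_j + 1). Then (A_{a_i} b_i)_{i=1}^j is an initial segment of the k-sandwiching sequence of w. If moreover A_0 m_j > w, then (A_{a_i} b_i)_{i=1}^j is the full k-sandwiching sequence of w, and hence w ≡_k A_{a_j} b_j + c where c = w − A_{a_j} b_j. -/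
/-- `NF k m a b c` says that `m ≡_k A_a b + c`, i.e. `m` has `k`-normal form
`A_a b + c` (so `m = A_a b + c` and the `k`-sandwiching sequence of `m` ends
with the pair `(a, b)`). -/
def NF (k m a b c : ℕ) : Prop :=
  m = Ack k a b + c ∧
    ∃ n as bs ms, 1 ≤ n ∧ IsSandwich k m n as bs ms ∧ a = as n ∧ b = bs n

/-!
Raising the index by one replaces `A_a` by an iterate of itself, so the ranges of the functions
`A_a` decrease with `a`: a value of `A_{a'}` with `a ≤ a'` never lies strictly between `A_a b` and
`A_a (b + 1)`. Along a sandwiching sequence the values `m_i` increase and the indices `a_i`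
decrease. Hence the upper bounds imposed on `m` in the first `j` steps, being values of functions of
index at least `a_j` that exceed `A_{a_j} b_j`, are at least `A_{a_j} (b_j + 1)`, and the lower
bounds are at most `m_j = A_{a_j} b_j`; so they hold for `w` as well. The sequence so obtained is
completed by repeatedly bracketing `w`, which must stop since the values strictly increase and are
at most `w`.
-/

theorem strictMono_iterate_of_forall_lt_map {α : Type*} [Preorder α] {f : α → α}
    (hf : ∀ x, x < f x) (x : α) : StrictMono fun n => f^[n] x :=
  strictMono_nat_of_lt_succ fun n => by
    rw [Function.iterate_succ_apply']
    exact hf _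

theorem exists_map_le_and_lt_map_add_one {f : ℕ → ℕ} (hf : StrictMono f) {m : ℕ}
    (hm : f 0 ≤ m) : ∃ n, f n ≤ m ∧ m < f (n + 1) := by
  have hmem : m ∈ ⋃ n, Set.Ico (f n) (f (Order.succ n)) := by
    rw [iUnion_Ico_map_succ_eq_Ici (fun n => hf.monotone bot_le)
      hf.not_bddAbove_range_of_wellFoundedLT]
    exact hm
  simpa only [Set.mem_iUnion, Set.mem_Ico, Order.succ_eq_add_one] using hmem

section Ack

variable {k : ℕ}

theorem lt_ack (hk : 2 ≤ k) (a x : ℕ) : x < Ack k a x := by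
  induction a generalizing x with
  | zero => exact Nat.lt_pow_self hk
  | succ a ih =>
    have hiter : ∀ y, y < (Ack k a)^[k] y := fun y =>
      strictMono_iterate_of_forall_lt_map ih y (by lia : 0 < k)
    exact (strictMono_iterate_of_forall_lt_map hiter 1).le_apply (x := x + 1)

theorem lt_iterate_ack (hk : 2 ≤ k) (a x : ℕ) : x < (Ack k a)^[k] x :=
  strictMono_iterate_of_forall_lt_map (lt_ack hk a) x (by lia : 0 < k)

theorem strictMono_ack (hk : 2 ≤ k) (a : ℕ) : StrictMono (Ack k a) := by
  cases a with
  | zero => exact pow_right_strictMono₀ hk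
  | succ a =>
    exact (strictMono_iterate_of_forall_lt_map (lt_iterate_ack hk a) 1).comp
      Order.succ_strictMono

theorem exists_lt_and_ack_add_one_eq (hk : 2 ≤ k) (a x : ℕ) :
    ∃ y, x < y ∧ Ack k (a + 1) x = Ack k a y := by
  obtain ⟨l, rfl⟩ := Nat.exists_eq_add_of_le' (one_le_two.trans hk)
  set z := ((Ack (l + 1) a)^[l + 1])^[x] 1
  have hxz : x < z := (strictMono_iterate_of_forall_lt_map (lt_iterate_ack hk a) 1).add_le_nat x 0
  have hz_le : z ≤ (Ack (l + 1) a)^[l] z :=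
    Function.id_le_iterate_of_id_le (fun y => (lt_ack hk a y).le) l z
  refine ⟨(Ack (l + 1) a)^[l] z, hxz.trans_le hz_le, ?_⟩
  calc Ack (l + 1) (a + 1) x = (Ack (l + 1) a)^[l + 1] z := Function.iterate_succ_apply' _ _ _
    _ = Ack (l + 1) a ((Ack (l + 1) a)^[l] z) := Function.iterate_succ_apply' _ _ _

theorem antitone_range_ack (hk : 2 ≤ k) : Antitone fun a => Set.range (Ack k a) :=
  antitone_nat_of_succ_le fun a => by
    rintro _ ⟨x, rfl⟩
    obtain ⟨y, -, hy⟩ := exists_lt_and_ack_add_one_eq hk a x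
    exact ⟨y, hy.symm⟩

theorem strictMono_ack_left (hk : 2 ≤ k) (x : ℕ) : StrictMono fun a => Ack k a x :=
  strictMono_nat_of_lt_succ fun a => by
    obtain ⟨y, hxy, hy⟩ := exists_lt_and_ack_add_one_eq hk a x
    rw [hy]
    exact strictMono_ack hk a hxy

theorem ack_add_one_le_of_ack_lt (hk : 2 ≤ k) {a a' b x : ℕ} (ha : a ≤ a')
    (h : Ack k a b < Ack k a' x) : Ack k a (b + 1) ≤ Ack k a' x := by
  obtain ⟨y, hy⟩ := antitone_range_ack hk ha ⟨x, rfl⟩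
  rw [← hy] at h ⊢
  exact (strictMono_ack hk a).monotone ((strictMono_ack hk a).lt_iff_lt.1 h)

end Ack

/-- A single step of the sandwiching of `m`: starting from the current value `v`, the index `a` is
determined by bracketing `m` between `A_a v` and `A_{a+1} v`, and the argument `b` by bracketing `m`
between `A_a b` and `A_a (b + 1)`. The next value is then `A_a b`. -/
structure IsSandwichStep (k m v a b : ℕ) : Prop where
  idx_lo : Ack k a v ≤ m
  idx_hi : m < Ack k (a + 1) v
  arg_lo : Ack k a b ≤ m
  arg_hi : m < Ack k a (b + 1)

namespace IsSandwichStep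

variable {k m v a b : ℕ}

theorem exists_of_ack_zero_le (hk : 2 ≤ k) (h : Ack k 0 v ≤ m) :
    ∃ a b, IsSandwichStep k m v a b := by
  obtain ⟨a, idx_lo, idx_hi⟩ := exists_map_le_and_lt_map_add_one (strictMono_ack_left hk v) h
  obtain ⟨b, arg_lo, arg_hi⟩ := exists_map_le_and_lt_map_add_one (strictMono_ack hk a)
    (((strictMono_ack hk a).monotone v.zero_le).trans idx_lo)
  exact ⟨a, b, idx_lo, idx_hi, arg_lo, arg_hi⟩

theorem ack_value_le_ack (h : IsSandwichStep k m v a b) (hk : 2 ≤ k) : Ack k a v ≤ Ack k a b :=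
  (strictMono_ack hk a).monotone <| Nat.le_of_lt_succ <|
    (strictMono_ack hk a).lt_iff_lt.1 (h.idx_lo.trans_lt h.arg_hi)

theorem value_lt_ack (h : IsSandwichStep k m v a b) (hk : 2 ≤ k) : v < Ack k a b :=
  (lt_ack hk a v).trans_le (h.ack_value_le_ack hk)

theorem next_idx_lt {a' b' : ℕ} (h : IsSandwichStep k m v a b) (hk : 2 ≤ k)
    (h' : IsSandwichStep k m (Ack k a b) a' b') : a' < a := by
  refine (strictMono_ack_left hk (Ack k a b)).lt_iff_lt.1 ?_
  calc Ack k a' (Ack k a b) ≤ m := h'.idx_lo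
    _ < Ack k a (b + 1) := h.arg_hi
    _ ≤ Ack k a (Ack k a b) := (strictMono_ack hk a).monotone (lt_ack hk a b)

theorem of_mem_bracket {a' b' w : ℕ} (h : IsSandwichStep k m v a b) (hk : 2 ≤ k) (ha : a' ≤ a)
    (hm : Ack k a' b' ≤ m) (hw_lo : Ack k a b ≤ w) (hw_hi : w < Ack k a' (b' + 1)) :
    IsSandwichStep k w v a b where
  idx_lo := (h.ack_value_le_ack hk).trans hw_lo
  idx_hi := hw_hi.trans_le <|
    ack_add_one_le_of_ack_lt hk (ha.trans a.le_succ) (hm.trans_lt h.idx_hi)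
  arg_lo := hw_lo
  arg_hi := hw_hi.trans_le <| ack_add_one_le_of_ack_lt hk ha (hm.trans_lt h.arg_hi)

end IsSandwichStep

/-- The first `n` steps of the sandwiching of `m`, that is, `IsSandwich` without the halting
condition `m < A_0 (ms n)`. As there, `a` and `b` are indexed from `1` and `ms` from `0`. -/
structure IsSandwichPrefix (k m n : ℕ) (a b ms : ℕ → ℕ) : Prop where
  ms_zero : ms 0 = 0
  step : ∀ i < n, IsSandwichStep k m (ms i) (a (i + 1)) (b (i + 1))
  ms_succ : ∀ i < n, ms (i + 1) = Ack k (a (i + 1)) (b (i + 1))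

theorem isSandwich_iff {k m n : ℕ} {a b ms : ℕ → ℕ} :
    IsSandwich k m n a b ms ↔ IsSandwichPrefix k m n a b ms ∧ m < Ack k 0 (ms n) where
  mp h := ⟨⟨h.ms_zero, fun i hi => ⟨h.idx_lo i hi, h.idx_hi i hi, h.arg_lo i hi, h.arg_hi i hi⟩,
    h.ms_succ⟩, h.halt⟩
  mpr h := ⟨h.1.ms_zero, fun i hi => (h.1.step i hi).idx_lo, fun i hi => (h.1.step i hi).idx_hi,
    fun i hi => (h.1.step i hi).arg_lo, fun i hi => (h.1.step i hi).arg_hi, h.1.ms_succ, h.2⟩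

namespace IsSandwichPrefix

variable {k m n : ℕ} {a b ms : ℕ → ℕ}

theorem of_le (h : IsSandwichPrefix k m n a b ms) {j : ℕ} (hj : j ≤ n) :
    IsSandwichPrefix k m j a b ms :=
  ⟨h.ms_zero, fun i hi => h.step i (hi.trans_le hj), fun i hi => h.ms_succ i (hi.trans_le hj)⟩

theorem strictMonoOn_values (h : IsSandwichPrefix k m n a b ms) (hk : 2 ≤ k) :
    StrictMonoOn ms (Set.Iic n) :=
  strictMonoOn_Iic_of_lt_succ fun i hi => by
    rw [Order.succ_eq_add_one, h.ms_succ i hi]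
    exact (h.step i hi).value_lt_ack hk

theorem strictAntiOn_indices (h : IsSandwichPrefix k m n a b ms) (hk : 2 ≤ k) :
    StrictAntiOn a (Set.Icc 1 n) := by
  refine strictAntiOn_of_add_one_lt Set.ordConnected_Icc fun i _ hi hi_succ => ?_
  obtain ⟨i, rfl⟩ := Nat.exists_eq_add_of_le' hi.1
  have hstep := h.step (i + 1) hi_succ.2
  rw [h.ms_succ i hi.2] at hstep
  exact (h.step i hi.2).next_idx_lt hk hstep

theorem of_mem_last_bracket {w : ℕ} (h : IsSandwichPrefix k m n a b ms) (hk : 2 ≤ k)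
    (hw_lo : Ack k (a n) (b n) ≤ w) (hw_hi : w < Ack k (a n) (b n + 1)) :
    IsSandwichPrefix k w n a b ms := by
  refine ⟨h.ms_zero, fun i hi => ?_, h.ms_succ⟩
  obtain ⟨l, rfl⟩ := Nat.exists_eq_add_of_le' (Nat.one_le_of_lt hi)
  have hidx : a (l + 1) ≤ a (i + 1) :=
    (h.strictAntiOn_indices hk).antitoneOn ⟨by lia, hi⟩ ⟨by lia, le_rfl⟩ hi
  have hvalue : Ack k (a (i + 1)) (b (i + 1)) ≤ Ack k (a (l + 1)) (b (l + 1)) := by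
    rw [← h.ms_succ i hi, ← h.ms_succ l l.lt_succ_self]
    exact (h.strictMonoOn_values hk).monotoneOn hi Set.self_mem_Iic hi
  exact (h.step i hi).of_mem_bracket hk hidx (h.step l l.lt_succ_self).arg_lo
    (hvalue.trans hw_lo) hw_hi

theorem snoc (h : IsSandwichPrefix k m n a b ms) {c x : ℕ}
    (hstep : IsSandwichStep k m (ms n) c x) :
    IsSandwichPrefix k m (n + 1) (Function.update a (n + 1) c) (Function.update b (n + 1) x)
      (Function.update ms (n + 1) (Ack k c x)) where
  ms_zero := by simpa using h.ms_zero
  step i hi := by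
    rcases Nat.lt_succ_iff_lt_or_eq.1 hi with hin | rfl
    · simpa [Function.update_apply, hin.ne, hi.ne] using h.step i hin
    · simpa using hstep
  ms_succ i hi := by
    rcases Nat.lt_succ_iff_lt_or_eq.1 hi with hin | rfl
    · simpa [Function.update_apply, hin.ne] using h.ms_succ i hin
    · simp

theorem exists_isSandwich (h : IsSandwichPrefix k m n a b ms) (hk : 2 ≤ k) :
    ∃ r d e ws, n ≤ r ∧ IsSandwich k m r d e ws ∧
      Set.EqOn d a (Set.Iic n) ∧ Set.EqOn e b (Set.Iic n) ∧ Set.EqOn ws ms (Set.Iic n) := by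
  induction hgap : m - ms n using Nat.strong_induction_on generalizing n a b ms with
  | _ gap ih =>
    by_cases hhalt : m < Ack k 0 (ms n)
    · exact ⟨n, a, b, ms, le_rfl, isSandwich_iff.2 ⟨h, hhalt⟩,
        Set.eqOn_refl _ _, Set.eqOn_refl _ _, Set.eqOn_refl _ _⟩
    obtain ⟨c, x, hstep⟩ := IsSandwichStep.exists_of_ack_zero_le hk (not_lt.1 hhalt)
    have hgap_lt : m - Function.update ms (n + 1) (Ack k c x) (n + 1) < gap := by
      have hgrow := hstep.value_lt_ack hk
      have hle := hstep.arg_lo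
      rw [Function.update_self]
      lia
    obtain ⟨r, d, e, ws, hr, hsand, hd, he, hws⟩ := ih _ hgap_lt (h.snoc hstep) rfl
    have hsub : Set.Iic n ⊆ Set.Iic (n + 1) := Set.Iic_subset_Iic.2 n.le_succ
    have hupdate (f : ℕ → ℕ) (y : ℕ) : Set.EqOn (Function.update f (n + 1) y) f (Set.Iic n) :=
      fun i hi => Function.update_of_ne (Nat.lt_succ_of_le hi).ne _ _
    exact ⟨r, d, e, ws, n.le_succ.trans hr, hsand, (hd.mono hsub).trans (hupdate a c),
      (he.mono hsub).trans (hupdate b x), (hws.mono hsub).trans (hupdate ms _)⟩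

end IsSandwichPrefix

theorem stmt_3 (k m n j w : ℕ) (a b ms : ℕ → ℕ) (hk : 2 ≤ k) (hm : 0 < m)
    (hs : IsSandwich k m n a b ms) (hj1 : 1 ≤ j) (hjn : j ≤ n)
    (hw1 : Ack k (a j) (b j) ≤ w) (hw2 : w < Ack k (a j) (b j + 1)) :
    (∃ r d e ws, j ≤ r ∧ IsSandwich k w r d e ws ∧ (∀ i ≤ j, ws i = ms i) ∧
        ∀ i, 1 ≤ i → i ≤ j → d i = a i ∧ e i = b i) ∧
      (w < Ack k 0 (ms j) →
        (∃ d e ws, IsSandwich k w j d e ws ∧ (∀ i ≤ j, ws i = ms i) ∧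
            ∀ i, 1 ≤ i → i ≤ j → d i = a i ∧ e i = b i) ∧
          NF k w (a j) (b j) (w - Ack k (a j) (b j))) := by
  have hsteps : IsSandwichPrefix k w j a b ms :=
    ((isSandwich_iff.1 hs).1.of_le hjn).of_mem_last_bracket hk hw1 hw2
  refine ⟨?_, fun hhalt => ?_⟩
  · obtain ⟨r, d, e, ws, hjr, hsand, hd, he, hws⟩ := hsteps.exists_isSandwich hk
    exact ⟨r, d, e, ws, hjr, hsand, hws, fun i _ hi => ⟨hd hi, he hi⟩⟩
  · have hsand : IsSandwich k w j a b ms := isSandwich_iff.2 ⟨hsteps, hhalt⟩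
    exact ⟨⟨a, b, ms, hsand, fun _ _ => rfl, fun _ _ _ => ⟨rfl, rfl⟩⟩,
      (Nat.add_sub_cancel' hw1).symm, j, a, b, ms, hj1, hsand, rfl, rfl⟩
end

section
/- Let (A_{a_i} b_i)_{i=1}^n be the k-sandwiching sequence of m where m ≡_k A_a b. Then exactly one of the following cases occurs: (a) n = 1 and ⟨m⟩₋₁ = b = 0; (b) n > 1 and 0 < ⟨m⟩₋₁ = b and b ≡_k A_{a_{−1}} b_{−1}; (c) ⟨m⟩₋₁ < b and b ≡_k A_d e + s for some d, e, s with d ≤ a_{n−1} in case n > 1, and either d ≤ a or s > 0. -/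
/-!
Write `B` for the last argument `b n` and `x` for the value `ms (n - 1)`. Since `x ≤ B < m`, each of
the first `n - 1` steps of the sandwiching sequence of `m` is also a step for `B`, so that the
sequence of `B` starts with these steps. If `x = B`, it stops there, because `B < A_0 B`. If `x < B`
and it stops there, then `n > 1` and the remainder `B - x` is positive. Otherwise it continues, and
its last index `d` satisfies `A_d x ≤ B < m`; comparing with the upper bounds on `m` from the steps
`n` and `n - 1` gives `d ≤ a n` and `d ≤ a (n - 1)`.
-/

namespace Ack

variable {k : ℕ}

theorem succ_eq_iterate_mul (k a b : ℕ) : Ack k (a + 1) b = (Ack k a)^[k * (b + 1)] 1 := by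
  rw [Ack, Function.iterate_mul]

theorem strictMono_index (hk : 2 ≤ k) (x : ℕ) : StrictMono fun a => Ack k a x := by
  refine strictMono_nat_of_lt_succ fun a => ?_
  have iterates_strictMono : StrictMono fun j => (Ack k a)^[j] 1 :=
    (strictMono hk a).strictMono_iterate_of_lt_map (lt_apply hk a 1)
  calc
    Ack k a x < Ack k a ((Ack k a)^[x + 1] 1) := strictMono hk a iterates_strictMono.le_apply
    _ = (Ack k a)^[x + 2] 1 := (Function.iterate_succ_apply' _ _ _).symm
    _ ≤ (Ack k a)^[k * (x + 1)] 1 := iterates_strictMono.monotone (by nlinarith)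
    _ = Ack k (a + 1) x := (succ_eq_iterate_mul k a x).symm

end Ack

theorem exists_le_and_lt_succ_of_strictMono {f : ℕ → ℕ} (hf : StrictMono f) {m : ℕ}
    (h0 : f 0 ≤ m) : ∃ y, f y ≤ m ∧ m < f (y + 1) := by
  obtain ⟨y, hy, hy'⟩ :=
    hf.exists_between_of_tendsto_atTop hf.tendsto_atTop (Nat.lt_succ_of_le h0)
  exact ⟨y, Nat.le_of_lt_succ hy, hy'⟩

/-- One step of the sandwiching of `m`, from the value `x` to the value `A_a b`. -/
structure IsSandwichStep_s6 (k m x a b : ℕ) : Prop where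
  idx_lo : Ack k a x ≤ m
  idx_hi : m < Ack k (a + 1) x
  arg_lo : Ack k a b ≤ m
  arg_hi : m < Ack k a (b + 1)

namespace IsSandwichStep_s6

variable {k m x a b : ℕ}

theorem le_arg (hk : 2 ≤ k) (h : IsSandwichStep_s6 k m x a b) : x ≤ b :=
  Nat.le_of_lt_succ <| (Ack.strictMono hk a).lt_iff_lt.1 (h.idx_lo.trans_lt h.arg_hi)

theorem of_le (hk : 2 ≤ k) (h : IsSandwichStep_s6 k m x a b) {m' : ℕ} (hlo : Ack k a b ≤ m')
    (hm' : m' ≤ m) : IsSandwichStep_s6 k m' x a b where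
  idx_lo := ((Ack.strictMono hk a).monotone (h.le_arg hk)).trans hlo
  idx_hi := hm'.trans_lt h.idx_hi
  arg_lo := hlo
  arg_hi := hm'.trans_lt h.arg_hi

theorem le_index (hk : 2 ≤ k) (h : IsSandwichStep_s6 k m x a b) {d : ℕ} (hd : Ack k d x ≤ m) :
    d ≤ a :=
  Nat.le_of_lt_succ <| (Ack.strictMono_index hk x).lt_iff_lt.1 (hd.trans_lt h.idx_hi)

theorem lt_index_of_apply_value_le (hk : 2 ≤ k) (h : IsSandwichStep_s6 k m x a b) {d : ℕ}
    (hd : Ack k d (Ack k a b) ≤ m) : d < a := by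
  refine (Ack.strictMono_index hk (Ack k a b)).lt_iff_lt.1 ?_
  calc
    Ack k d (Ack k a b) ≤ m := hd
    _ < Ack k a (b + 1) := h.arg_hi
    _ ≤ Ack k a (Ack k a b) := (Ack.strictMono hk a).monotone (Ack.lt_apply hk a b)

end IsSandwichStep_s6

theorem exists_isSandwichStep {k m x : ℕ} (hk : 2 ≤ k) (hx : Ack k 0 x ≤ m) :
    ∃ a b, IsSandwichStep_s6 k m x a b := by
  obtain ⟨a, ha, ha'⟩ := exists_le_and_lt_succ_of_strictMono (Ack.strictMono_index hk x) hx
  have hzero : Ack k a 0 ≤ m := ((Ack.strictMono hk a).monotone x.zero_le).trans ha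
  obtain ⟨b, hb, hb'⟩ := exists_le_and_lt_succ_of_strictMono (Ack.strictMono hk a) hzero
  exact ⟨a, b, ha, ha', hb, hb'⟩

/-- An initial segment, of length `n`, of the sandwiching sequence of `m`: all the conditions of
`IsSandwich` except the halting condition. -/
structure IsPartialSandwich (k m n : ℕ) (a b ms : ℕ → ℕ) : Prop where
  ms_zero : ms 0 = 0
  step : ∀ i < n, IsSandwichStep_s6 k m (ms i) (a (i + 1)) (b (i + 1))
  ms_succ : ∀ i < n, ms (i + 1) = Ack k (a (i + 1)) (b (i + 1))

namespace IsPartialSandwich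

variable {k m n : ℕ} {a b ms : ℕ → ℕ}

theorem isSandwich (h : IsPartialSandwich k m n a b ms) (halt : m < Ack k 0 (ms n)) :
    IsSandwich k m n a b ms where
  ms_zero := h.ms_zero
  idx_lo i hi := (h.step i hi).idx_lo
  idx_hi i hi := (h.step i hi).idx_hi
  arg_lo i hi := (h.step i hi).arg_lo
  arg_hi i hi := (h.step i hi).arg_hi
  ms_succ := h.ms_succ
  halt := halt

theorem ms_lt_ms_succ (hk : 2 ≤ k) (h : IsPartialSandwich k m n a b ms) {i : ℕ} (hi : i < n) :
    ms i < ms (i + 1) :=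
  calc
    ms i ≤ b (i + 1) := (h.step i hi).le_arg hk
    _ < Ack k (a (i + 1)) (b (i + 1)) := Ack.lt_apply hk _ _
    _ = ms (i + 1) := (h.ms_succ i hi).symm

theorem monotoneOn_ms (hk : 2 ≤ k) (h : IsPartialSandwich k m n a b ms) :
    MonotoneOn ms (Set.Iic n) :=
  monotoneOn_of_le_add_one Set.ordConnected_Iic fun _ _ _ hi => (h.ms_lt_ms_succ hk hi).le

theorem of_le (hk : 2 ≤ k) (h : IsPartialSandwich k m n a b ms) {m' p : ℕ} (hp : p ≤ n)
    (hlo : ms p ≤ m') (hm' : m' ≤ m) : IsPartialSandwich k m' p a b ms where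
  ms_zero := h.ms_zero
  step i hi := by
    have value_le : Ack k (a (i + 1)) (b (i + 1)) ≤ m' :=
      calc
        Ack k (a (i + 1)) (b (i + 1)) = ms (i + 1) := (h.ms_succ i (hi.trans_le hp)).symm
        _ ≤ ms p := h.monotoneOn_ms hk (Nat.succ_le_of_lt (hi.trans_le hp)) hp hi
        _ ≤ m' := hlo
    exact (h.step i (hi.trans_le hp)).of_le hk value_le hm'
  ms_succ i hi := h.ms_succ i (hi.trans_le hp)

theorem snoc (h : IsPartialSandwich k m n a b ms) {α β : ℕ}
    (hstep : IsSandwichStep_s6 k m (ms n) α β) :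
    IsPartialSandwich k m (n + 1) (Function.update a (n + 1) α) (Function.update b (n + 1) β)
      (Function.update ms (n + 1) (Ack k α β)) where
  ms_zero := by simpa using h.ms_zero
  step i hi := by
    rcases Nat.lt_succ_iff_lt_or_eq.1 hi with hi | rfl
    · simpa [hi.ne, (hi.trans n.lt_succ_self).ne] using h.step i hi
    · simpa using hstep
  ms_succ i hi := by
    rcases Nat.lt_succ_iff_lt_or_eq.1 hi with hi | rfl
    · simpa [hi.ne] using h.ms_succ i hi
    · simp

theorem nf_of_halt (h : IsPartialSandwich k m (n + 1) a b ms)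
    (halt : m < Ack k 0 (ms (n + 1))) :
    NF k m (a (n + 1)) (b (n + 1)) (m - ms (n + 1)) := by
  refine ⟨?_, n + 1, a, b, ms, n.succ_pos, h.isSandwich halt, rfl, rfl⟩
  rw [h.ms_succ n n.lt_succ_self, Nat.add_sub_cancel' (h.step n n.lt_succ_self).arg_lo]

theorem exists_nf_of_not_halt (hk : 2 ≤ k) (h : IsPartialSandwich k m n a b ms)
    (hcont : Ack k 0 (ms n) ≤ m) : ∃ d e s, NF k m d e s ∧ Ack k d (ms n) ≤ m := by
  induction hN : m - ms n using Nat.strong_induction_on generalizing n a b ms with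
  | _ N ih =>
    obtain ⟨α, β, hstep⟩ := exists_isSandwichStep hk hcont
    have hext := h.snoc hstep
    have value_eq : Function.update ms (n + 1) (Ack k α β) (n + 1) = Ack k α β := by simp
    have value_gt : ms n < Ack k α β := (hstep.le_arg hk).trans_lt (Ack.lt_apply hk α β)
    rcases lt_or_ge m (Ack k 0 (Ack k α β)) with halt | hcont'
    · have hnf := hext.nf_of_halt (by rwa [value_eq])
      rw [Function.update_self] at hnf
      exact ⟨α, _, _, hnf, hstep.idx_lo⟩
    · obtain ⟨d, e, s, hnf, hd⟩ := ih (m - Ack k α β) (by have := hstep.arg_lo; lia) hext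
        (by rwa [value_eq]) (by rw [value_eq])
      rw [value_eq] at hd
      exact ⟨d, e, s, hnf, ((Ack.strictMono hk d).monotone value_gt.le).trans hd⟩

end IsPartialSandwich

namespace IsSandwich

variable {k m n : ℕ} {a b ms : ℕ → ℕ}

theorem isPartialSandwich (h : IsSandwich k m n a b ms) : IsPartialSandwich k m n a b ms where
  ms_zero := h.ms_zero
  step i hi := ⟨h.idx_lo i hi, h.idx_hi i hi, h.arg_lo i hi, h.arg_hi i hi⟩
  ms_succ := h.ms_succ

theorem arg_lt (hk : 2 ≤ k) (h : IsSandwich k m n a b ms) {i : ℕ} (hi : i < n) : b (i + 1) < m :=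
  (Ack.lt_apply hk _ _).trans_le (h.arg_lo i hi)

theorem ms_le_arg (hk : 2 ≤ k) (h : IsSandwich k m n a b ms) {i : ℕ} (hi : i < n) :
    ms i ≤ b (i + 1) :=
  (h.isPartialSandwich.step i hi).le_arg hk

theorem isPartialSandwich_arg (hk : 2 ≤ k) (h : IsSandwich k m n a b ms) {i : ℕ} (hi : i < n) :
    IsPartialSandwich k (b (i + 1)) i a b ms :=
  h.isPartialSandwich.of_le hk hi.le (h.ms_le_arg hk hi) (h.arg_lt hk hi).le

theorem nf_arg_of_ms_eq_arg (hk : 2 ≤ k) (h : IsSandwich k m n a b ms) {i : ℕ} (hi : i + 1 < n)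
    (heq : ms (i + 1) = b (i + 2)) : NF k (b (i + 2)) (a (i + 1)) (b (i + 1)) 0 := by
  have halt : b (i + 2) < Ack k 0 (ms (i + 1)) := heq ▸ Ack.lt_apply hk 0 _
  simpa only [heq, Nat.sub_self] using (h.isPartialSandwich_arg hk hi).nf_of_halt halt

theorem le_index_of_apply_ms_le (hk : 2 ≤ k) (h : IsSandwich k m n a b ms) {i d : ℕ} (hi : i < n)
    (hd : Ack k d (ms i) ≤ m) : (0 < i → d ≤ a i) ∧ d ≤ a (i + 1) := by
  refine ⟨fun hpos => ?_, (h.isPartialSandwich.step i hi).le_index hk hd⟩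
  obtain ⟨j, rfl⟩ := Nat.exists_eq_add_one.2 hpos
  have hj : j < n := j.lt_succ_self.trans hi
  rw [h.ms_succ j hj] at hd
  exact ((h.isPartialSandwich.step j hj).lt_index_of_apply_value_le hk hd).le

theorem exists_nf_arg_of_ms_lt_arg (hk : 2 ≤ k) (h : IsSandwich k m n a b ms) {i : ℕ} (hi : i < n)
    (hlt : ms i < b (i + 1)) :
    ∃ d e s, NF k (b (i + 1)) d e s ∧ (0 < i → d ≤ a i) ∧ (d ≤ a (i + 1) ∨ 0 < s) := by
  have hpartial := h.isPartialSandwich_arg hk hi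
  rcases lt_or_ge (b (i + 1)) (Ack k 0 (ms i)) with halt | hcont
  · cases i with
    | zero =>
      rw [h.ms_zero, Ack, pow_zero] at halt
      lia
    | succ j =>
      exact ⟨_, _, _, hpartial.nf_of_halt halt, fun _ => le_rfl, Or.inr (Nat.sub_pos_of_lt hlt)⟩
  · obtain ⟨d, e, s, hnf, hd⟩ := hpartial.exists_nf_of_not_halt hk hcont
    have hindex := h.le_index_of_apply_ms_le hk hi (hd.trans (h.arg_lt hk hi).le)
    exact ⟨d, e, s, hnf, hindex.1, Or.inl hindex.2⟩

end IsSandwich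

theorem stmt_6_general (k n m : ℕ) (aseq bseq ms : ℕ → ℕ) (hk : 2 ≤ k) (hn : 1 ≤ n)
    (hs : IsSandwich k m n aseq bseq ms) :
    ((n = 1 ∧ ms (n - 1) = bseq n ∧ bseq n = 0) ∨
      (1 < n ∧ 0 < ms (n - 1) ∧ ms (n - 1) = bseq n ∧
        NF k (bseq n) (aseq (n - 1)) (bseq (n - 1)) 0) ∨
      (ms (n - 1) < bseq n ∧ ∃ d e s, NF k (bseq n) d e s ∧
        (1 < n → d ≤ aseq (n - 1)) ∧ (d ≤ aseq n ∨ 0 < s))) ∧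
    ¬((n = 1 ∧ ms (n - 1) = bseq n ∧ bseq n = 0) ∧
      (1 < n ∧ 0 < ms (n - 1) ∧ ms (n - 1) = bseq n ∧
        NF k (bseq n) (aseq (n - 1)) (bseq (n - 1)) 0)) ∧
    ¬((n = 1 ∧ ms (n - 1) = bseq n ∧ bseq n = 0) ∧
      (ms (n - 1) < bseq n ∧ ∃ d e s, NF k (bseq n) d e s ∧
        (1 < n → d ≤ aseq (n - 1)) ∧ (d ≤ aseq n ∨ 0 < s))) ∧
    ¬((1 < n ∧ 0 < ms (n - 1) ∧ ms (n - 1) = bseq n ∧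
        NF k (bseq n) (aseq (n - 1)) (bseq (n - 1)) 0) ∧
      (ms (n - 1) < bseq n ∧ ∃ d e s, NF k (bseq n) d e s ∧
        (1 < n → d ≤ aseq (n - 1)) ∧ (d ≤ aseq n ∨ 0 < s))) := by
  refine ⟨?_, by lia, by lia, by lia⟩
  obtain ⟨p, rfl⟩ := Nat.exists_eq_add_one.2 hn
  rw [Nat.add_sub_cancel]
  rcases (hs.ms_le_arg hk p.lt_succ_self).eq_or_lt with heq | hlt
  · cases p with
    | zero => exact Or.inl ⟨rfl, heq, heq ▸ hs.ms_zero⟩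
    | succ q =>
      have hpos : 0 < ms (q + 1) :=
        Nat.zero_lt_of_lt (hs.isPartialSandwich.ms_lt_ms_succ hk (by lia : q < q + 1 + 1))
      exact Or.inr (Or.inl ⟨by lia, hpos, heq, hs.nf_arg_of_ms_eq_arg hk (by lia) heq⟩)
  · obtain ⟨d, e, s, hnf, hprev, hlast⟩ := hs.exists_nf_arg_of_ms_lt_arg hk p.lt_succ_self hlt
    exact Or.inr (Or.inr ⟨hlt, d, e, s, hnf, fun hp => hprev (by lia), hlast⟩)

theorem stmt_6 (k n m : ℕ) (aseq bseq ms : ℕ → ℕ) (hk : 2 ≤ k) (hn : 1 ≤ n)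
    (hs : IsSandwich k m n aseq bseq ms) (hm : m = Ack k (aseq n) (bseq n)) :
    ((n = 1 ∧ ms (n - 1) = bseq n ∧ bseq n = 0) ∨
      (1 < n ∧ 0 < ms (n - 1) ∧ ms (n - 1) = bseq n ∧
        NF k (bseq n) (aseq (n - 1)) (bseq (n - 1)) 0) ∨
      (ms (n - 1) < bseq n ∧ ∃ d e s, NF k (bseq n) d e s ∧
        (1 < n → d ≤ aseq (n - 1)) ∧ (d ≤ aseq n ∨ 0 < s))) ∧
    ¬((n = 1 ∧ ms (n - 1) = bseq n ∧ bseq n = 0) ∧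
      (1 < n ∧ 0 < ms (n - 1) ∧ ms (n - 1) = bseq n ∧
        NF k (bseq n) (aseq (n - 1)) (bseq (n - 1)) 0)) ∧
    ¬((n = 1 ∧ ms (n - 1) = bseq n ∧ bseq n = 0) ∧
      (ms (n - 1) < bseq n ∧ ∃ d e s, NF k (bseq n) d e s ∧
        (1 < n → d ≤ aseq (n - 1)) ∧ (d ≤ aseq n ∨ 0 < s))) ∧
    ¬((1 < n ∧ 0 < ms (n - 1) ∧ ms (n - 1) = bseq n ∧
        NF k (bseq n) (aseq (n - 1)) (bseq (n - 1)) 0) ∧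
      (ms (n - 1) < bseq n ∧ ∃ d e s, NF k (bseq n) d e s ∧
        (1 < n → d ≤ aseq (n - 1)) ∧ (d ≤ aseq n ∨ 0 < s))) :=
  stmt_6_general k n m aseq bseq ms hk hn hs
end
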